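/- Let 0 ≤ r ≤ 8. For every conic class C ∈ ℤ^{1+r}, the class β = −K + C satisfies p_a(β) = 2, β·l ≥ 1 for every line class l, and β·C′ ≥ 1 for every conic class C′; moreover β ≠ −2K. Consequently, the map C ↦ −K + C is a bijection from the set of conic classes onto the set of classes β with p_a(β) = 2, β·l ≥ 1 for all line classes l, and β·C′ ≥ 1 for all conic classes C′, after removing β = −2K from the latter set when r = 8. -/

import Mathlib

/-!
Write `v² = inter v v`. Two facts about the Picard lattice carry the proof.

* Hodge index (`hodge`, from Cauchy–Schwarz and `r ≤ 8`): `v² ≤ (v·K)²` for every class `v`. Applied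
  to `2C − 3l` and to `C − C'` it gives `C·l ≥ 0` and `C·C' ≥ 0` for conics `C, C'` and lines `l`, so
  `−K + C` is positive on lines and conics.
* Nef classes have nonnegative square (`sq_nonneg_of_lines`, for `r ≥ 2`): if `D·l ≥ 0` for all
  lines then `D² ≥ 0`. Reflecting in a root `h − e_i − e_j − e_k` with `D·(h − e_i − e_j − e_k) < 0`
  preserves the hypothesis and `D²` and lowers the degree `D·h ≥ 0`, so one may assume
  `a_i + a_j + a_k ≤ d` for all distinct `i, j, k`; then `∑ a_i² ≤ d²` is elementary.

Given `β` in the target set, put `D = β + K`. Then `D² + D·(−K) = 2`, while `D·l ≥ 0` on lines, so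
`D² ≥ 0` and `D·h ≥ 0`. The Hodge index inequality leaves only `(D², −K·D) = (0, 2)`, a conic, and
`(1, 1)`, which forces `r = 8` and `D = −K`, that is `β = −2K`.
-/

/-- Intersection pairing on the Picard lattice of `S_r`, with classes written in
`(d; a_1, …, a_r)` coordinates (the class `d·h − ∑ a_i·e_i`):
`(d; a)·(d'; a') = d·d' − ∑ a_i·a_i'`. -/
def inter {r : ℕ} (x y : ℤ × (Fin r → ℤ)) : ℤ :=
  x.1 * y.1 - ∑ i, x.2 i * y.2 i

/-- The canonical class `K = (−3; −1, …, −1)` of `S_r`. -/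
def Kcl (r : ℕ) : ℤ × (Fin r → ℤ) := (-3, fun _ => -1)

/-- A line class: `l·l = −1` and `(−K)·l = 1`. -/
def IsLine {r : ℕ} (l : ℤ × (Fin r → ℤ)) : Prop :=
  inter l l = -1 ∧ inter (-(Kcl r)) l = 1

/-- A conic class: `C·C = 0` and `(−K)·C = 2`. -/
def IsConic {r : ℕ} (C : ℤ × (Fin r → ℤ)) : Prop :=
  inter C C = 0 ∧ inter (-(Kcl r)) C = 2

/-- Arithmetic genus `p_a(β) = β·(β+K)/2 + 1`. -/
def pa {r : ℕ} (β : ℤ × (Fin r → ℤ)) : ℤ :=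
  inter β (β + Kcl r) / 2 + 1

/-! ### Bilinearity and standard classes -/

lemma inter_comm' {r : ℕ} (x y : ℤ × (Fin r → ℤ)) : inter x y = inter y x := by
  simp [inter, mul_comm]

lemma inter_add_left {r : ℕ} (x y z : ℤ × (Fin r → ℤ)) :
    inter (x + y) z = inter x z + inter y z := by
  simp only [inter, Prod.fst_add, Prod.snd_add, Pi.add_apply, add_mul, Finset.sum_add_distrib]
  ring

lemma inter_smul_left {r : ℕ} (n : ℤ) (x z : ℤ × (Fin r → ℤ)) :
    inter (n • x) z = n * inter x z := by
  simp only [inter, Prod.smul_fst, Prod.smul_snd, Pi.smul_apply, smul_eq_mul, mul_assoc,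
    ← Finset.mul_sum]
  ring

lemma inter_neg_left {r : ℕ} (x z : ℤ × (Fin r → ℤ)) : inter (-x) z = -inter x z := by
  simpa using inter_smul_left (-1) x z

lemma inter_sub_left {r : ℕ} (x y z : ℤ × (Fin r → ℤ)) :
    inter (x - y) z = inter x z - inter y z := by
  rw [sub_eq_add_neg, inter_add_left, inter_neg_left]; ring

lemma inter_add_right {r : ℕ} (x y z : ℤ × (Fin r → ℤ)) :
    inter z (x + y) = inter z x + inter z y := by
  simp only [inter_comm' z, inter_add_left]

lemma inter_smul_right {r : ℕ} (n : ℤ) (x z : ℤ × (Fin r → ℤ)) :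
    inter z (n • x) = n * inter z x := by
  simp only [inter_comm' z, inter_smul_left]

lemma inter_neg_right {r : ℕ} (x z : ℤ × (Fin r → ℤ)) : inter z (-x) = -inter z x := by
  simp only [inter_comm' z, inter_neg_left]

lemma inter_sub_right {r : ℕ} (x y z : ℤ × (Fin r → ℤ)) :
    inter z (x - y) = inter z x - inter z y := by
  simp only [inter_comm' z, inter_sub_left]

/-- The class `h` of the pullback of a line in the plane. -/
def Hcl (r : ℕ) : ℤ × (Fin r → ℤ) := (1, 0)

/-- The exceptional class `e_i`; its `i`-th coordinate is `-1`, since `(d; a)` stands for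
`d·h − ∑ a_i·e_i`. -/
def Ecl {r : ℕ} (i : Fin r) : ℤ × (Fin r → ℤ) := (0, Pi.single i (-1))

lemma inter_H {r : ℕ} (x : ℤ × (Fin r → ℤ)) : inter x (Hcl r) = x.1 := by
  simp [inter, Hcl]

lemma inter_E {r : ℕ} (x : ℤ × (Fin r → ℤ)) (i : Fin r) : inter x (Ecl i) = x.2 i := by
  simp [inter, Ecl, Pi.single_apply]

lemma inter_K {r : ℕ} (x : ℤ × (Fin r → ℤ)) : inter x (Kcl r) = -3 * x.1 + ∑ i, x.2 i := by
  simp [inter, Kcl]; ring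

lemma K_sq (r : ℕ) : inter (Kcl r) (Kcl r) = 9 - r := by
  simp [inter, Kcl]

lemma line_E {r : ℕ} (i : Fin r) : IsLine (Ecl i) := by
  constructor
  · rw [inter_E]; simp [Ecl]
  · rw [inter_E]; simp [Kcl]

lemma line_HEE {r : ℕ} {i j : Fin r} (h : i ≠ j) : IsLine (Hcl r - Ecl i - Ecl j) := by
  constructor
  · simp only [inter_sub_right, inter_H, inter_E]
    simp [Ecl, Hcl, h, h.symm]
  · simp only [inter_sub_right, inter_H, inter_E]
    simp [Kcl]

/-! ### Hodge index inequality -/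

lemma hodge_CS {r : ℕ} (hr : r ≤ 8) (a : Fin r → ℤ) :
    (∑ i, a i) ^ 2 ≤ 8 * ∑ i, a i * a i := by
  have h := sq_sum_le_card_mul_sum_sq (s := Finset.univ) (f := a)
  have h0 : 0 ≤ ∑ i, a i * a i := Finset.sum_nonneg fun i _ => mul_self_nonneg _
  simp only [Finset.card_univ, Fintype.card_fin, pow_two (a _)] at h
  have : (r : ℤ) ≤ 8 := by exact_mod_cast hr
  nlinarith

lemma hodge {r : ℕ} (hr : r ≤ 8) (v : ℤ × (Fin r → ℤ)) :
    inter v v ≤ (inter v (Kcl r)) ^ 2 := by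
  have h := hodge_CS hr v.2
  rw [inter_K]
  unfold inter
  nlinarith [sq_nonneg (8 * v.1 - 3 * ∑ i, v.2 i)]

lemma conic_line_nonneg {r : ℕ} (hr : r ≤ 8) {C l : ℤ × (Fin r → ℤ)} (hC : IsConic C)
    (hl : IsLine l) : 0 ≤ inter C l := by
  have h := hodge hr ((2 : ℤ) • C - (3 : ℤ) • l)
  obtain ⟨h1, h2⟩ := hC
  obtain ⟨h3, h4⟩ := hl
  rw [inter_neg_left, inter_comm'] at h2 h4
  simp only [inter_sub_left, inter_sub_right, inter_smul_left, inter_smul_right,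
    inter_comm' l C] at h
  have e1 : inter C (Kcl r) = -2 := by linarith
  have e2 : inter l (Kcl r) = -1 := by linarith
  rw [h1, h3, e1, e2] at h
  omega

lemma conic_conic_nonneg {r : ℕ} (hr : r ≤ 8) {C C' : ℤ × (Fin r → ℤ)} (hC : IsConic C)
    (hC' : IsConic C') : 0 ≤ inter C C' := by
  have h := hodge hr (C - C')
  obtain ⟨h1, h2⟩ := hC
  obtain ⟨h3, h4⟩ := hC'
  rw [inter_neg_left, inter_comm'] at h2 h4
  simp only [inter_sub_left, inter_sub_right, inter_comm' C' C] at h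
  have e1 : inter C (Kcl r) = -2 := by linarith
  have e2 : inter C' (Kcl r) = -2 := by linarith
  rw [h1, h3, e1, e2] at h
  omega

/-! ### Nef classes have nonnegative square -/

/-- The square of a class in the fundamental chamber is nonnegative. Pick the three largest
coordinates `x ≥ y ≥ z`; the at most five others are at most `z`, and
`x² + y² + 6z² ≤ (x + y + z)² ≤ d²`. -/
lemma chamber_sq {r : ℕ} (hr3 : 3 ≤ r) (hr : r ≤ 8) (d : ℤ) (a : Fin r → ℤ)
    (h0 : ∀ i, 0 ≤ a i)
    (h3 : ∀ i j k, i ≠ j → i ≠ k → j ≠ k → a i + a j + a k ≤ d) :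
    ∑ i, a i * a i ≤ d * d := by
  classical
  have hc : (Finset.univ : Finset (Fin r)).card = r := by simp
  obtain ⟨i, hi, mi⟩ := Finset.exists_max_image (Finset.univ : Finset (Fin r)) a
    (Finset.card_pos.1 (by omega))
  have hc1 := Finset.card_erase_of_mem hi
  obtain ⟨j, hj, mj⟩ := Finset.exists_max_image (Finset.univ.erase i) a
    (Finset.card_pos.1 (by omega))
  have hc2 := Finset.card_erase_of_mem hj
  obtain ⟨k, hk, mk⟩ := Finset.exists_max_image ((Finset.univ.erase i).erase j) a
    (Finset.card_pos.1 (by omega))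
  have hc3 := Finset.card_erase_of_mem hk
  have hs : ∑ x ∈ ((Finset.univ.erase i).erase j).erase k, a x * a x ≤ 5 * (a k * a k) := by
    have := Finset.sum_le_card_nsmul (((Finset.univ.erase i).erase j).erase k)
      (fun x => a x * a x) (a k * a k) (fun x hx => by
        have := mk x (Finset.mem_of_mem_erase hx)
        exact mul_self_le_mul_self (h0 x) this)
    rw [nsmul_eq_mul] at this
    refine this.trans (mul_le_mul_of_nonneg_right ?_ (mul_self_nonneg _))
    have : (((Finset.univ.erase i).erase j).erase k).card ≤ 5 := by omega
    exact_mod_cast this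
  have hij : a j ≤ a i := mi j (Finset.mem_univ _)
  have hjk : a k ≤ a j := mj k (Finset.mem_of_mem_erase hk)
  have hji : j ≠ i := Finset.ne_of_mem_erase hj
  have hkj : k ≠ j := Finset.ne_of_mem_erase hk
  have hki : k ≠ i := Finset.ne_of_mem_erase (Finset.mem_of_mem_erase hk)
  have ht := h3 i j k hji.symm hki.symm hkj.symm
  rw [← Finset.add_sum_erase _ _ hi, ← Finset.add_sum_erase _ _ hj, ← Finset.add_sum_erase _ _ hk]
  have hk0 := h0 k
  have hd : (a i + a j + a k) * (a i + a j + a k) ≤ d * d :=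
    mul_self_le_mul_self (by linarith [h0 i, h0 j]) ht
  nlinarith [mul_nonneg (sub_nonneg.2 hij) hk0, mul_nonneg (sub_nonneg.2 hjk) hk0,
    mul_nonneg (sub_nonneg.2 hij) (h0 j), mul_nonneg (sub_nonneg.2 hjk) (h0 j)]

lemma deg_nonneg_of_lines {r : ℕ} (hr2 : 2 ≤ r) (D : ℤ × (Fin r → ℤ))
    (hD : ∀ l, IsLine l → 0 ≤ inter D l) : 0 ≤ D.1 := by
  have h1 := hD _ (line_E ⟨0, by omega⟩)
  have h2 := hD _ (line_E ⟨1, by omega⟩)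
  have h3 := hD _ (line_HEE (r := r) (i := ⟨0, by omega⟩) (j := ⟨1, by omega⟩) (by simp))
  simp only [inter_sub_right, inter_H, inter_E] at h1 h2 h3
  linarith

/-- The reflection in a root `α` (a class with `α² = −2` and `α·K = 0`). -/
def rootRefl {r : ℕ} (α x : ℤ × (Fin r → ℤ)) : ℤ × (Fin r → ℤ) := x + inter x α • α

lemma rootRefl_adjoint {r : ℕ} (α x y : ℤ × (Fin r → ℤ)) :
    inter (rootRefl α x) y = inter x (rootRefl α y) := by
  simp only [rootRefl, inter_add_left, inter_add_right, inter_smul_left, inter_smul_right,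
    inter_comm' α y]
  ring

lemma rootRefl_isometry {r : ℕ} {α : ℤ × (Fin r → ℤ)} (hα : inter α α = -2)
    (x : ℤ × (Fin r → ℤ)) : inter (rootRefl α x) (rootRefl α x) = inter x x := by
  simp only [rootRefl, inter_add_left, inter_add_right, inter_smul_left, inter_smul_right,
    inter_comm' α x, hα]
  ring

lemma rootRefl_line {r : ℕ} {α : ℤ × (Fin r → ℤ)} (hα : inter α α = -2)
    (hK : inter (Kcl r) α = 0) {l : ℤ × (Fin r → ℤ)} (hl : IsLine l) : IsLine (rootRefl α l) := by
  refine ⟨(rootRefl_isometry hα l).trans hl.1, ?_⟩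
  have h := hl.2
  simp only [inter_neg_left] at h
  simp only [rootRefl, inter_add_right, inter_smul_right, inter_neg_left, hK]
  linarith

/-- A class that is nonnegative on lines has nonnegative square, by descent on its degree along
reflections. -/
lemma sq_nonneg_of_lines {r : ℕ} (hr2 : 2 ≤ r) (hr : r ≤ 8) (n : ℕ) :
    ∀ D : ℤ × (Fin r → ℤ), D.1 ≤ n → (∀ l, IsLine l → 0 ≤ inter D l) → 0 ≤ inter D D := by
  induction n using Nat.strong_induction_on with
  | _ n ih =>
  intro D hn hD
  have h0 : ∀ i, 0 ≤ D.2 i := fun i => by simpa [inter_E] using hD _ (line_E i)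
  by_cases h : ∀ i j k, i ≠ j → i ≠ k → j ≠ k → D.2 i + D.2 j + D.2 k ≤ D.1
  · obtain rfl | hr3 : r = 2 ∨ 3 ≤ r := by omega
    · have h3 := hD _ (line_HEE (r := 2) (i := 0) (j := 1) (by simp))
      simp only [inter_sub_right, inter_H, inter_E] at h3
      simp only [inter, Fin.sum_univ_two]
      nlinarith [h0 0, h0 1, mul_nonneg (h0 0) (h0 1)]
    · have := chamber_sq hr3 hr D.1 D.2 h0 h
      unfold inter
      linarith
  · push Not at h
    obtain ⟨i, j, k, hij, hik, hjk, hlt⟩ := h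
    set α : ℤ × (Fin r → ℤ) := Hcl r - Ecl i - Ecl j - Ecl k with hαdef
    have hα : inter α α = -2 := by
      simp only [hαdef, inter_sub_right, inter_H, inter_E]
      simp [Hcl, Ecl, hij, hik, hjk, hij.symm, hik.symm, hjk.symm]
    have hK : inter (Kcl r) α = 0 := by
      simp only [hαdef, inter_sub_right, inter_H, inter_E]
      simp [Kcl]
    have hDα : inter D α < 0 := by
      simp only [hαdef, inter_sub_right, inter_H, inter_E]
      linarith
    have hα1 : α.1 = 1 := by simp [hαdef, Hcl, Ecl]
    have hD' : ∀ l, IsLine l → 0 ≤ inter (rootRefl α D) l := fun l hl => by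
      rw [rootRefl_adjoint]
      exact hD _ (rootRefl_line hα hK hl)
    have hdeg : (rootRefl α D).1 = D.1 + inter D α := by simp [rootRefl, hα1]
    have hpos := deg_nonneg_of_lines hr2 _ hD'
    rw [← rootRefl_isometry hα]
    exact ih (rootRefl α D).1.toNat (by omega) _ (by omega) hD'

/-! ### Classification -/

/-- The adjoint class `D = β + K` has nonnegative square and degree. For `r ≤ 1` there are too few
lines for the descent, and the genus equation and the conic `h − e₁` are used instead. -/
lemma adjoint_nef {r : ℕ} (hr : r ≤ 8) (D : ℤ × (Fin r → ℤ))
    (hg : inter D D - inter D (Kcl r) = 2) (hl : ∀ l, IsLine l → 0 ≤ inter D l)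
    (hc : ∀ C, IsConic C → -1 ≤ inter D C) : 0 ≤ inter D D ∧ 0 ≤ D.1 := by
  obtain rfl | rfl | h2 : r = 0 ∨ r = 1 ∨ 2 ≤ r := by omega
  · rw [inter_K] at hg
    simp only [inter, Finset.univ_eq_empty, Finset.sum_empty] at hg ⊢
    have h1 : -4 < D.1 := by nlinarith
    have h2 : D.1 < 1 := by nlinarith
    generalize D.1 = d at *
    interval_cases d <;> omega
  · have hC : IsConic (Hcl 1 - Ecl 0) := by
      constructor <;> simp [inter, Hcl, Ecl, Kcl]
    have h1 := hl _ (line_E 0)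
    have h3 := hc _ hC
    rw [inter_K] at hg
    simp only [inter_sub_right, inter_H, inter_E] at h1 h3
    simp only [inter, Finset.univ_unique, Fin.default_eq_zero, Finset.sum_singleton] at hg ⊢
    have h4 : D.1 - D.2 0 ≠ -1 := fun h => by
      have : D.1 = D.2 0 - 1 := by linarith
      rw [this] at hg
      ring_nf at hg
      omega
    have h5 : D.2 0 ≤ D.1 := by omega
    exact ⟨by nlinarith, by linarith⟩
  · have hd := deg_nonneg_of_lines h2 D hl
    exact ⟨sq_nonneg_of_lines h2 hr D.1.toNat D (by omega) hl, hd⟩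

/-- By the Hodge index inequality an adjoint class is a conic, or it is `−K` and `r = 8`. -/
lemma adjoint_classification {r : ℕ} (hr : r ≤ 8) (D : ℤ × (Fin r → ℤ))
    (hg : inter D D - inter D (Kcl r) = 2) (hsq : 0 ≤ inter D D) (hd : 0 ≤ D.1) :
    IsConic D ∨ (r = 8 ∧ D = -(Kcl r)) := by
  have hcs := sq_sum_le_card_mul_sum_sq (s := Finset.univ) (f := D.2)
  simp only [Finset.card_univ, Fintype.card_fin, pow_two (D.2 _)] at hcs
  have h8 := hodge_CS hr D.2
  have hQ : ∑ i, D.2 i * D.2 i = D.1 * D.1 - inter D D := by unfold inter; ring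
  have hS : ∑ i, D.2 i = 3 * D.1 + inter D (Kcl r) := by rw [inter_K]; ring
  have hQ2 : inter D D = 2 + inter D (Kcl r) := by linarith
  -- `m = D·K` satisfies `m ≥ -2` because `D² ≥ 0`.
  set m := inter D (Kcl r) with hm
  rw [hQ2] at hQ hsq
  rw [hQ, hS] at h8 hcs
  have hm0 : m < 0 := by
    by_contra hcon
    nlinarith [mul_nonneg hd (not_lt.1 hcon), sq_nonneg D.1]
  obtain h | h : m = -2 ∨ m = -1 := by omega
  · left
    refine ⟨by rw [hQ2, h]; rfl, ?_⟩
    rw [inter_neg_left, inter_comm', ← hm, h]; rfl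
  · right
    rw [h] at h8 hcs hQ hS
    have hd3 : D.1 = 3 := by
      have : (D.1 - 3) ^ 2 ≤ 0 := by nlinarith
      have := pow_eq_zero_iff (two_ne_zero) |>.1 (le_antisymm this (sq_nonneg _))
      linarith
    rw [hd3] at hcs hQ hS
    have hr8 : r = 8 := by
      have : (8 : ℤ) ≤ r := by linarith
      omega
    subst hr8
    refine ⟨rfl, ?_⟩
    have hz : ∑ i, (D.2 i - 1) ^ 2 = 0 := by
      have : ∀ i, (D.2 i - 1) ^ 2 = D.2 i * D.2 i - 2 * D.2 i + 1 := fun i => by ring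
      simp only [this, Finset.sum_add_distrib, Finset.sum_sub_distrib, ← Finset.mul_sum, hQ, hS]
      simp
    rw [Finset.sum_eq_zero_iff_of_nonneg (fun i _ => sq_nonneg _)] at hz
    refine Prod.ext (by simp [Kcl, hd3]) (funext fun i => ?_)
    have := pow_eq_zero_iff (two_ne_zero) |>.1 (hz i (Finset.mem_univ _))
    simp only [Kcl, Prod.snd_neg, Pi.neg_apply]
    linarith

/-- The product `β·(β + K)` is even, so the integer division in `pa` is exact. -/
lemma even_inter_add_K {r : ℕ} (β : ℤ × (Fin r → ℤ)) : Even (inter β (β + Kcl r)) := by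
  rw [inter_add_right, inter_K]
  have h1 : inter β β + (-3 * β.1 + ∑ i, β.2 i)
      = β.1 * (β.1 - 3) - ∑ i, β.2 i * (β.2 i - 1) := by
    simp only [inter, mul_sub, Finset.sum_sub_distrib, mul_one]
    ring
  rw [h1]
  refine Even.sub ?_ (Finset.even_sum _ fun i _ => Int.even_mul_pred_self _)
  have := Int.even_mul_pred_self β.1
  have h2 : β.1 * (β.1 - 3) = β.1 * (β.1 - 1) - 2 * β.1 := by ring
  rw [h2]
  exact this.sub (even_two_mul _)

/-- `C ↦ −K + C` is a bijection from conic classes onto the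
(numerically) very ample classes of arithmetic genus `2` (with `−2K` removed
when `r = 8`), and each `−K + C` satisfies the listed properties and is `≠ −2K`. -/
theorem genus_two_very_ample_classification (r : ℕ) (hr : r ≤ 8) :
    (∀ C : ℤ × (Fin r → ℤ), IsConic C →
      pa (-(Kcl r) + C) = 2 ∧
      (∀ l : ℤ × (Fin r → ℤ), IsLine l → 1 ≤ inter (-(Kcl r) + C) l) ∧
      (∀ C' : ℤ × (Fin r → ℤ), IsConic C' → 1 ≤ inter (-(Kcl r) + C) C') ∧
      -(Kcl r) + C ≠ -(Kcl r + Kcl r)) ∧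
    Set.BijOn (fun C => -(Kcl r) + C)
      {C : ℤ × (Fin r → ℤ) | IsConic C}
      {β : ℤ × (Fin r → ℤ) | pa β = 2 ∧
        (∀ l : ℤ × (Fin r → ℤ), IsLine l → 1 ≤ inter β l) ∧
        (∀ C' : ℤ × (Fin r → ℤ), IsConic C' → 1 ≤ inter β C') ∧
        (r = 8 → β ≠ -(Kcl r + Kcl r))} := by
  have first : ∀ C : ℤ × (Fin r → ℤ), IsConic C →
      pa (-(Kcl r) + C) = 2 ∧
      (∀ l : ℤ × (Fin r → ℤ), IsLine l → 1 ≤ inter (-(Kcl r) + C) l) ∧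
      (∀ C' : ℤ × (Fin r → ℤ), IsConic C' → 1 ≤ inter (-(Kcl r) + C) C') ∧
      -(Kcl r) + C ≠ -(Kcl r + Kcl r) := by
    intro C hC
    refine ⟨?_, fun l hl => ?_, fun C' hC' => ?_, fun h => ?_⟩
    · have : -(Kcl r) + C + Kcl r = C := by abel
      rw [pa, this, inter_add_left, hC.1, hC.2]
      rfl
    · rw [inter_add_left, hl.2]
      linarith [conic_line_nonneg hr hC hl]
    · rw [inter_add_left, hC'.2]
      linarith [conic_conic_nonneg hr hC hC']
    · have hCK : C = -(Kcl r) := by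
        rw [neg_add] at h
        exact add_left_cancel h
      have h1 := hC.1
      rw [hCK, inter_neg_left, inter_neg_right, K_sq] at h1
      omega
  refine ⟨first, fun C hC => ?_, fun C _ C' _ h => add_left_cancel h, ?_⟩
  · obtain ⟨h1, h2, h3, h4⟩ := first C hC
    exact ⟨h1, h2, h3, fun _ => h4⟩
  · rintro β ⟨hp, hl, hc, hne⟩
    obtain ⟨D, rfl⟩ : ∃ D, β = -(Kcl r) + D := ⟨Kcl r + β, by abel⟩
    refine ⟨D, ?_, rfl⟩
    have hg : inter D D - inter D (Kcl r) = 2 := by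
      have he := even_inter_add_K (-(Kcl r) + D)
      have : -(Kcl r) + D + Kcl r = D := by abel
      rw [pa, this] at hp
      rw [this] at he
      obtain ⟨t, ht⟩ := he
      have : inter (-(Kcl r) + D) D = 2 := by omega
      rw [inter_add_left, inter_neg_left, inter_comm' (Kcl r)] at this
      linarith
    obtain ⟨hsq, hd⟩ := adjoint_nef hr D hg
      (fun l h => by have := hl l h; rw [inter_add_left, h.2] at this; linarith)
      (fun C h => by have := hc C h; rw [inter_add_left, h.2] at this; linarith)
    rcases adjoint_classification hr D hg hsq hd with h | ⟨h8, h⟩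
    · exact h
    · exact absurd (by rw [h, neg_add]) (hne h8)
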